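/- Let N ≥ 2 be an integer and let m be an integer with 1 ≤ m ≤ N. Then Σ_{α=1}^{N−1} η_α^m / (η_α − 1) = (N+1)/2 − m. -/

import Mathlib

open Finset

/-- The roots of unity `η_α = exp(2πiα/N)`. -/
noncomputable def η (N α : ℕ) : ℂ :=
  Complex.exp (2 * Real.pi * Complex.I * α / N)

/-!
On the nontrivial `N`-th roots of unity `x ^ m / (x - 1)` differs from `x / (x - 1)` by the
geometric sum `x + ⋯ + x ^ (m - 1)`, and each of these `m - 1` powers sums to `-1` over the roots.
This reduces everything to `m = 1`, where the terms at `x` and at `x⁻¹` add up to `1`.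
-/

theorem pow_ne_one_of_isPrimitiveRoot_of_mem_Ico {M : Type*} [CommMonoid M] {ζ : M} {N k : ℕ}
    (hζ : IsPrimitiveRoot ζ N) (hk : k ∈ Ico 1 N) : ζ ^ k ≠ 1 := by
  obtain ⟨one_le, lt⟩ := mem_Ico.1 hk
  exact hζ.pow_ne_one_of_pos_of_lt (by lia) lt

theorem geom_sum_Ico_one_eq_neg_one {R : Type*} [Ring R] [NoZeroDivisors R] {x : R} {N : ℕ}
    (hx : x ≠ 1) (hN : 1 ≤ N) (hxN : x ^ N = 1) : ∑ k ∈ Ico 1 N, x ^ k = -1 :=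
  mul_right_cancel₀ (sub_ne_zero.2 hx) <| by
    rw [geom_sum_Ico_mul x hN, hxN, pow_one, neg_one_mul, neg_sub]

theorem sum_pow_pow_eq_neg_one_of_isPrimitiveRoot {R : Type*} [CommRing R] [NoZeroDivisors R]
    {ζ : R} {N m : ℕ} (hζ : IsPrimitiveRoot ζ N) (hm : m ∈ Ico 1 N) :
    ∑ α ∈ Ico 1 N, (ζ ^ α) ^ m = -1 := by
  have hζm : ζ ^ m ≠ 1 := pow_ne_one_of_isPrimitiveRoot_of_mem_Ico hζ hm
  have hζmN : (ζ ^ m) ^ N = 1 := by rw [pow_right_comm, hζ.pow_eq_one, one_pow]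
  have hN : 1 ≤ N := by grind
  simpa only [pow_right_comm ζ m] using geom_sum_Ico_one_eq_neg_one hζm hN hζmN

section DivisionRing

variable {K : Type*} [DivisionRing K] {x y : K}

theorem pow_div_sub_one_eq_add_geom_sum_Ico {m : ℕ} (hx : x ≠ 1) (hm : 1 ≤ m) :
    x ^ m / (x - 1) = x / (x - 1) + ∑ k ∈ Ico 1 m, x ^ k := by
  rw [geom_sum_Ico hx hm, pow_one, ← add_div, add_sub_cancel]

theorem div_sub_one_add_div_sub_one_of_mul_eq_one (hx : x ≠ 1) (hxy : x * y = 1) :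
    x / (x - 1) + y / (y - 1) = 1 := by
  have hy : y / (y - 1) = -(1 / (x - 1)) := by
    have hfactor : y - 1 = -(x - 1) * y := by rw [neg_mul, sub_one_mul, hxy, neg_sub]
    rw [hfactor, div_mul_cancel_right₀ (right_ne_zero_of_mul_eq_one hxy), inv_neg, one_div]
  rw [hy, ← sub_eq_add_neg, ← sub_div, div_self (sub_ne_zero.2 hx)]

end DivisionRing

section Field

variable {K : Type*} [Field K] {ζ : K} {N m : ℕ}

theorem two_mul_sum_pow_div_pow_sub_one (hζ : IsPrimitiveRoot ζ N) (hN : 1 ≤ N) :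
    2 * ∑ α ∈ Ico 1 N, ζ ^ α / (ζ ^ α - 1) = N - 1 := by
  have hreflect : ∑ α ∈ Ico 1 N, ζ ^ (N - α) / (ζ ^ (N - α) - 1) =
      ∑ α ∈ Ico 1 N, ζ ^ α / (ζ ^ α - 1) := by
    simpa using sum_Ico_reflect (fun α ↦ ζ ^ α / (ζ ^ α - 1)) 1 N.le_succ
  have hpair : ∀ α ∈ Ico 1 N,
      ζ ^ α / (ζ ^ α - 1) + ζ ^ (N - α) / (ζ ^ (N - α) - 1) = 1 := fun α hα ↦
    div_sub_one_add_div_sub_one_of_mul_eq_one (pow_ne_one_of_isPrimitiveRoot_of_mem_Ico hζ hα) <| by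
      rw [pow_mul_pow_sub ζ (mem_Ico.1 hα).2.le, hζ.pow_eq_one]
  calc 2 * ∑ α ∈ Ico 1 N, ζ ^ α / (ζ ^ α - 1)
      = ∑ α ∈ Ico 1 N, (ζ ^ α / (ζ ^ α - 1) + ζ ^ (N - α) / (ζ ^ (N - α) - 1)) := by
        rw [sum_add_distrib, hreflect, two_mul]
    _ = N - 1 := by simp [sum_congr rfl hpair, Nat.cast_sub hN]

theorem stmt12_general [NeZero (2 : K)] (hζ : IsPrimitiveRoot ζ N) (hm : 1 ≤ m) (hmN : m ≤ N) :
    ∑ α ∈ Ico 1 N, (ζ ^ α) ^ m / (ζ ^ α - 1) = ((N : K) + 1) / 2 - m := by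
  have hbase : ∑ α ∈ Ico 1 N, ζ ^ α / (ζ ^ α - 1) = ((N : K) - 1) / 2 :=
    eq_div_of_mul_eq two_ne_zero <|
      (mul_comm _ _).trans (two_mul_sum_pow_div_pow_sub_one hζ (hm.trans hmN))
  have hpowers : ∀ k ∈ Ico 1 m, ∑ α ∈ Ico 1 N, (ζ ^ α) ^ k = -1 := fun k hk ↦
    sum_pow_pow_eq_neg_one_of_isPrimitiveRoot hζ (Ico_subset_Ico_right hmN hk)
  calc ∑ α ∈ Ico 1 N, (ζ ^ α) ^ m / (ζ ^ α - 1)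
      = ∑ α ∈ Ico 1 N, (ζ ^ α / (ζ ^ α - 1) + ∑ k ∈ Ico 1 m, (ζ ^ α) ^ k) :=
        sum_congr rfl fun α hα ↦
          pow_div_sub_one_eq_add_geom_sum_Ico (pow_ne_one_of_isPrimitiveRoot_of_mem_Ico hζ hα) hm
    _ = ∑ α ∈ Ico 1 N, ζ ^ α / (ζ ^ α - 1) + ∑ k ∈ Ico 1 m, ∑ α ∈ Ico 1 N, (ζ ^ α) ^ k := by
        rw [sum_add_distrib, sum_comm]
    _ = ((N : K) - 1) / 2 - (m - 1) := by
        rw [hbase, sum_congr rfl hpowers]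
        simp [Nat.cast_sub hm, sub_eq_add_neg]
    _ = ((N : K) + 1) / 2 - m := by
        field_simp
        ring

end Field

theorem η_eq_η_one_pow (N α : ℕ) : η N α = η N 1 ^ α := by
  rw [η, η, ← Complex.exp_nat_mul]
  congr 1
  push_cast
  ring

theorem isPrimitiveRoot_η_one {N : ℕ} (hN : N ≠ 0) : IsPrimitiveRoot (η N 1) N := by
  simpa [η] using Complex.isPrimitiveRoot_exp N hN

theorem stmt12 (N : ℕ) (hN : 2 ≤ N) (m : ℕ) (hm1 : 1 ≤ m) (hm2 : m ≤ N) :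
    ∑ α ∈ Finset.Icc 1 (N - 1), η N α ^ m / (η N α - 1) = ((N : ℂ) + 1) / 2 - m := by
  rw [Icc_sub_one_right_eq_Ico_of_not_isMin (not_isMin_of_lt hN)]
  simpa only [← η_eq_η_one_pow] using stmt12_general (isPrimitiveRoot_η_one (by lia)) hm1 hm2
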